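/- arXiv:2207.04387 — 2 statements merged into one kernel-verified Lean document; each statement's English description precedes it below -/
import Mathlib

section
/- Let U : ℝ^d → ℝ ∪ {+∞} be measurable with 0 < ∫_{ℝ^d} e^{−U(x)} dx < ∞, and for each λ > 0 let U_λ : ℝ^d → ℝ ∪ {+∞} be measurable such that: (i) U_λ(x) ≤ U(x) for all x and all λ > 0; (ii) for each x, λ ↦ U_λ(x) is nonincreasing in λ; (iii) for each x, U_λ(x) → U(x) as λ ↓ 0; (iv) ∫_{ℝ^d} e^{−U_{λ₀}(x)} dx < ∞ for some λ₀ > 0. Let π and π_λ denote the probability measures with Lebesgue densities proportional to e^{−U} and e^{−U_λ}, respectively. Then ‖π_λ − π‖_TV → 0 as λ ↓ 0. -/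
open scoped ENNReal Topology
open MeasureTheory Filter

/-- `e^{-u}` for `u ∈ ℝ ∪ {±∞}`, valued in `ℝ≥0∞`. -/
noncomputable def expNeg (u : EReal) : ℝ≥0∞ :=
  if u = ⊤ then 0 else if u = ⊥ then ⊤ else ENNReal.ofReal (Real.exp (-u.toReal))

/-- The total variation distance `sup_{A Borel} |μ(A) − ν(A)|`. -/
noncomputable def tvDist {α : Type*} [MeasurableSpace α] (μ ν : Measure α) : ℝ :=
  ⨆ A : {A : Set α // MeasurableSet A}, |(μ A.1).toReal - (ν A.1).toReal|

theorem expNeg_eq_exp_neg (u : EReal) : expNeg u = EReal.exp (-u) := by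
  induction u <;> simp [expNeg, ← EReal.coe_neg]

theorem continuous_expNeg : Continuous expNeg := by
  simp only [funext expNeg_eq_exp_neg]
  exact ENNReal.continuous_exp.comp continuous_neg

theorem antitone_expNeg : Antitone expNeg := fun u v huv => by
  simp only [expNeg_eq_exp_neg]
  exact EReal.exp_monotone (EReal.neg_le_neg_iff.2 huv)

/-- The total variation distance is nonnegative. -/
theorem tvDist_nonneg {α : Type*} [MeasurableSpace α] (μ ν : Measure α) : 0 ≤ tvDist μ ν :=
  Real.iSup_nonneg fun _ => abs_nonneg _

/-- The mass which a normalized density gives to a measurable set. -/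
theorem withDensity_div_lintegral_apply_toReal {α : Type*} [MeasurableSpace α] {μ : Measure α}
    {f : α → ℝ≥0∞} (hf : Measurable f) {A : Set α} (hA : MeasurableSet A) :
    (μ.withDensity (fun x => f x / ∫⁻ y, f y ∂μ) A).toReal =
      (∫⁻ x in A, f x ∂μ).toReal / (∫⁻ x, f x ∂μ).toReal := by
  simp_rw [withDensity_apply _ hA, div_eq_mul_inv]
  rw [lintegral_mul_const _ hf, ENNReal.toReal_mul, ENNReal.toReal_inv]

/-- If `f ≤ g`, the total variation distance between the probability measures with densities
proportional to `g` and `f` is at most `(∫ g - ∫ f) / ∫ f`. -/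
theorem tvDist_withDensity_le_of_le {α : Type*} [MeasurableSpace α] {μ : Measure α}
    {f g : α → ℝ≥0∞} (hf : Measurable f) (hg : Measurable g) (hfg : f ≤ g)
    (hfpos : 0 < ∫⁻ x, f x ∂μ) (hgfin : (∫⁻ x, g x ∂μ) < ∞) :
    tvDist (μ.withDensity fun x => g x / ∫⁻ y, g y ∂μ)
        (μ.withDensity fun x => f x / ∫⁻ y, f y ∂μ) ≤
      ((∫⁻ x, g x ∂μ).toReal - (∫⁻ x, f x ∂μ).toReal) / (∫⁻ x, f x ∂μ).toReal := by
  have hle : (∫⁻ x, f x ∂μ) ≤ ∫⁻ x, g x ∂μ := lintegral_mono hfg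
  have hffin : (∫⁻ x, f x ∂μ) ≠ ∞ := (hle.trans_lt hgfin).ne
  have hZ : 0 < (∫⁻ x, f x ∂μ).toReal := ENNReal.toReal_pos hfpos.ne' hffin
  have hZle : (∫⁻ x, f x ∂μ).toReal ≤ (∫⁻ x, g x ∂μ).toReal := ENNReal.toReal_mono hgfin.ne hle
  have : Nonempty {A : Set α // MeasurableSet A} := ⟨⟨∅, .empty⟩⟩
  refine ciSup_le fun ⟨A, hA⟩ => ?_
  have hgA (B : Set α) : (∫⁻ x in B, g x ∂μ) ≠ ∞ :=
    ((setLIntegral_le_lintegral B g).trans_lt hgfin).ne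
  have hfA (B : Set α) : (∫⁻ x in B, f x ∂μ) ≠ ∞ :=
    ((setLIntegral_le_lintegral B f).trans_lt hffin.lt_top).ne
  have hmono (B : Set α) : (∫⁻ x in B, f x ∂μ).toReal ≤ (∫⁻ x in B, g x ∂μ).toReal :=
    ENNReal.toReal_mono (hgA B) (lintegral_mono hfg)
  have hfsplit := congrArg ENNReal.toReal (lintegral_add_compl (μ := μ) f hA)
  have hgsplit := congrArg ENNReal.toReal (lintegral_add_compl (μ := μ) g hA)
  rw [ENNReal.toReal_add (hfA _) (hfA _)] at hfsplit
  rw [ENNReal.toReal_add (hgA _) (hgA _)] at hgsplit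
  rw [withDensity_div_lintegral_apply_toReal hf hA, withDensity_div_lintegral_apply_toReal hg hA]
  have hA_mono := hmono A
  have hAc_mono := hmono Aᶜ
  have ha : 0 ≤ (∫⁻ x in A, f x ∂μ).toReal := ENNReal.toReal_nonneg
  have hac : 0 ≤ (∫⁻ x in Aᶜ, f x ∂μ).toReal := ENNReal.toReal_nonneg
  generalize (∫⁻ x in A, f x ∂μ).toReal = a at *
  generalize (∫⁻ x in A, g x ∂μ).toReal = b at *
  generalize (∫⁻ x in Aᶜ, f x ∂μ).toReal = a' at *
  generalize (∫⁻ x in Aᶜ, g x ∂μ).toReal = b' at *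
  generalize (∫⁻ x, f x ∂μ).toReal = Z at *
  generalize (∫⁻ x, g x ∂μ).toReal = W at *
  have hW : 0 < W := hZ.trans_le hZle
  rw [abs_le]
  constructor
  · have hquot : a / W ≤ b / W := by gcongr
    have hbound : a / Z - a / W ≤ (W - Z) / Z := by
      rw [div_sub_div _ _ hZ.ne' hW.ne', div_le_div_iff₀ (by positivity) hZ]
      have : a * (W - Z) ≤ W * (W - Z) :=
        mul_le_mul_of_nonneg_right (by linarith) (by linarith)
      nlinarith
    linarith
  · have hquot : b / W ≤ b / Z := div_le_div_of_nonneg_left (by linarith) hZ hZle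
    have hbound : b / Z - a / Z ≤ (W - Z) / Z := by
      rw [← sub_div]
      gcongr ?_ / Z
      linarith
    linarith

/-- If `U_λ ≤ U`, `λ ↦ U_λ(x)` is nonincreasing, `U_λ(x) → U(x)` as `λ ↓ 0`, and
`e^{−U_{λ₀}}` has finite integral for some `λ₀ > 0`, then
`‖π_λ − π‖_TV → 0` as `λ ↓ 0`. -/
theorem stmt4 {d : ℕ} (U : EuclideanSpace ℝ (Fin d) → EReal)
    (hU : Measurable U) (hUbot : ∀ x, U x ≠ ⊥)
    (hZUpos : 0 < ∫⁻ x, expNeg (U x))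
    (hZUfin : (∫⁻ x, expNeg (U x)) < ∞)
    (Ulam : ℝ → EuclideanSpace ℝ (Fin d) → EReal)
    (hmeas : ∀ l, 0 < l → Measurable (Ulam l))
    (hbot : ∀ l, 0 < l → ∀ x, Ulam l x ≠ ⊥)
    (h1 : ∀ l, 0 < l → ∀ x, Ulam l x ≤ U x)
    (h2 : ∀ x : EuclideanSpace ℝ (Fin d), ∀ l m : ℝ, 0 < l → l ≤ m → Ulam m x ≤ Ulam l x)
    (h3 : ∀ x : EuclideanSpace ℝ (Fin d),
      Tendsto (fun l => Ulam l x) (𝓝[>] (0 : ℝ)) (𝓝 (U x)))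
    (h4 : ∃ l₀ : ℝ, 0 < l₀ ∧ (∫⁻ x, expNeg (Ulam l₀ x)) < ∞) :
    Tendsto
      (fun l =>
        tvDist
          (volume.withDensity fun x => expNeg (Ulam l x) / ∫⁻ y, expNeg (Ulam l y))
          (volume.withDensity fun x => expNeg (U x) / ∫⁻ y, expNeg (U y)))
      (𝓝[>] (0 : ℝ)) (𝓝 0) := by
  obtain ⟨l₀, hl₀, hfin⟩ := h4
  have hsmall : ∀ᶠ l in 𝓝[>] (0 : ℝ), 0 < l ∧ l ≤ l₀ :=
    Ioc_mem_nhdsGT hl₀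
  have hdom : ∀ l, 0 < l → l ≤ l₀ → ∀ x, expNeg (Ulam l x) ≤ expNeg (Ulam l₀ x) :=
    fun l hl hle x => antitone_expNeg (h2 x l l₀ hl hle)
  have hZ : Tendsto (fun l => ∫⁻ x, expNeg (Ulam l x)) (𝓝[>] (0 : ℝ))
      (𝓝 (∫⁻ x, expNeg (U x))) := by
    refine tendsto_lintegral_filter_of_dominated_convergence (fun x => expNeg (Ulam l₀ x))
      ?_ ?_ hfin.ne ?_
    · filter_upwards [hsmall] with l hl
      exact continuous_expNeg.measurable.comp (hmeas l hl.1)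
    · filter_upwards [hsmall] with l hl
      exact .of_forall (hdom l hl.1 hl.2)
    · exact .of_forall fun x => (continuous_expNeg.tendsto _).comp (h3 x)
  have hbound : Tendsto (fun l =>
      ((∫⁻ x, expNeg (Ulam l x)).toReal - (∫⁻ x, expNeg (U x)).toReal) /
        (∫⁻ x, expNeg (U x)).toReal) (𝓝[>] (0 : ℝ)) (𝓝 0) := by
    simpa using (((ENNReal.tendsto_toReal hZUfin.ne).comp hZ).sub_const
      (∫⁻ x, expNeg (U x)).toReal).div_const
      (∫⁻ x, expNeg (U x)).toReal
  refine squeeze_zero' (.of_forall fun l => tvDist_nonneg _ _) ?_ hbound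
  filter_upwards [hsmall] with l hl
  exact tvDist_withDensity_le_of_le (continuous_expNeg.measurable.comp hU)
    (continuous_expNeg.measurable.comp (hmeas l hl.1))
    (fun x => antitone_expNeg (h1 l hl.1 x)) hZUpos
    ((lintegral_mono (hdom l hl.1 hl.2)).trans_lt hfin)
end

section
/- Let ψ : ℝ^d → ℝ be continuously differentiable and strictly convex, and suppose that for each x ∈ ℝ^d the map y ↦ D_ψ(y, x) is coercive (i.e., D_ψ(y, x) → +∞ as ‖y‖ → +∞). Let g : ℝ^d → ℝ ∪ {+∞} be proper, lower semicontinuous, and bounded below. Then for each x ∈ ℝ^d, the map λ ↦ env←_{λ,g}^ψ(x) is nonincreasing on (0, ∞), env←_{λ,g}^ψ(x) ≤ g(x) for every λ > 0, and env←_{λ,g}^ψ(x) → g(x) as λ ↓ 0 (monotonically increasing to g(x)). -/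
open scoped RealInnerProductSpace Topology
open Filter

/-- The Bregman divergence associated with a differentiable function `ψ`. -/
noncomputable def bregmanDiv {d : ℕ} (ψ : EuclideanSpace ℝ (Fin d) → ℝ)
    (x y : EuclideanSpace ℝ (Fin d)) : ℝ :=
  ψ x - ψ y - ⟪gradient ψ y, x - y⟫

/-- The left Bregman–Moreau envelope of an extended-real-valued `g` associated with `ψ`. -/
noncomputable def leftEnvE {d : ℕ} (ψ : EuclideanSpace ℝ (Fin d) → ℝ)
    (g : EuclideanSpace ℝ (Fin d) → EReal) (lam : ℝ)
    (x : EuclideanSpace ℝ (Fin d)) : EReal :=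
  ⨅ y : EuclideanSpace ℝ (Fin d), (g y + ((1 / lam * bregmanDiv ψ y x : ℝ) : EReal))

theorem bregmanDiv_self {d : ℕ} (ψ : EuclideanSpace ℝ (Fin d) → ℝ)
    (x : EuclideanSpace ℝ (Fin d)) : bregmanDiv ψ x x = 0 := by
  simp [bregmanDiv]

theorem bregmanDiv_pos {d : ℕ} {ψ : EuclideanSpace ℝ (Fin d) → ℝ}
    (hstrict : StrictConvexOn ℝ Set.univ ψ) {x y : EuclideanSpace ℝ (Fin d)}
    (hψ : DifferentiableAt ℝ ψ x) (hyx : y ≠ x) : 0 < bregmanDiv ψ y x := by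
  have hline : StrictConvexOn ℝ Set.univ (fun t : ℝ => ψ (x + t • (y - x))) := by
    refine ⟨convex_univ, fun s _ t _ hst a b ha hb hab => ?_⟩
    have hne : x + s • (y - x) ≠ x + t • (y - x) := fun h =>
      hst (smul_left_injective ℝ (sub_ne_zero.2 hyx) (add_left_cancel h))
    have h := hstrict.2 (Set.mem_univ _) (Set.mem_univ _) hne ha hb hab
    have hcomb : a • (x + s • (y - x)) + b • (x + t • (y - x))
        = x + (a • s + b • t) • (y - x) := by
      obtain rfl : b = 1 - a := by linarith
      simp only [smul_eq_mul]
      module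
    rwa [hcomb] at h
  have hderiv : HasDerivAt (fun t : ℝ => ψ (x + t • (y - x))) ⟪gradient ψ x, y - x⟫ 0 := by
    have hinner : HasDerivAt (fun t : ℝ => x + t • (y - x)) (y - x) 0 := by
      simpa using ((hasDerivAt_id (0 : ℝ)).smul_const (y - x)).const_add x
    have hfd : HasFDerivAt ψ (InnerProductSpace.toDual ℝ _ (gradient ψ x))
        (x + (0 : ℝ) • (y - x)) := by
      simpa using hψ.hasGradientAt.hasFDerivAt
    exact hfd.comp_hasDerivAt (0 : ℝ) hinner
  have h := hline.lt_slope_of_hasDerivAt (Set.mem_univ 0) (Set.mem_univ 1) one_pos hderiv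
  simp only [slope_def_field, one_smul, zero_smul, add_zero, add_sub_cancel, sub_zero,
    div_one] at h
  unfold bregmanDiv
  linarith

theorem bregmanDiv_nonneg {d : ℕ} {ψ : EuclideanSpace ℝ (Fin d) → ℝ}
    (hstrict : StrictConvexOn ℝ Set.univ ψ) {x : EuclideanSpace ℝ (Fin d)}
    (hψ : DifferentiableAt ℝ ψ x) (y : EuclideanSpace ℝ (Fin d)) : 0 ≤ bregmanDiv ψ y x := by
  rcases eq_or_ne y x with rfl | hyx
  · exact (bregmanDiv_self ψ y).ge
  · exact (bregmanDiv_pos hstrict hψ hyx).le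

/-- A coercive Bregman divergence is bounded away from zero outside any ball around its
base point. -/
theorem exists_pos_le_bregmanDiv {d : ℕ} {ψ : EuclideanSpace ℝ (Fin d) → ℝ}
    (hψ : Differentiable ℝ ψ) (hstrict : StrictConvexOn ℝ Set.univ ψ)
    {x : EuclideanSpace ℝ (Fin d)}
    (hcoer : Tendsto (fun y => bregmanDiv ψ y x) (comap (fun y => ‖y‖) atTop) atTop)
    {ε : ℝ} (hε : 0 < ε) :
    ∃ δ > 0, ∀ y, ε ≤ dist y x → δ ≤ bregmanDiv ψ y x := by
  by_cases hne : ∃ y₀, ε ≤ dist y₀ x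
  · obtain ⟨y₀, hy₀⟩ := hne
    have hcont : Continuous (fun y => bregmanDiv ψ y x) := by
      have := hψ.continuous
      unfold bregmanDiv
      fun_prop
    have hclosed : IsClosed {y | ε ≤ dist y x} :=
      isClosed_le continuous_const (continuous_id.dist continuous_const)
    rw [comap_norm_atTop, Metric.cobounded_eq_cocompact] at hcoer
    obtain ⟨z, hz, hmin⟩ := hcont.continuousOn.exists_isMinOn' hclosed hy₀
      ((hcoer.eventually_ge_atTop _).filter_mono inf_le_left)
    refine ⟨bregmanDiv ψ z x, bregmanDiv_pos hstrict (hψ x) ?_, fun y hy => hmin hy⟩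
    exact dist_pos.1 (hε.trans_le hz)
  · push Not at hne
    exact ⟨1, one_pos, fun y hy => absurd hy (hne y).not_ge⟩

theorem leftEnvE_le {d : ℕ} (ψ : EuclideanSpace ℝ (Fin d) → ℝ)
    (g : EuclideanSpace ℝ (Fin d) → EReal) (lam : ℝ) (x : EuclideanSpace ℝ (Fin d)) :
    leftEnvE ψ g lam x ≤ g x :=
  (iInf_le _ x).trans_eq (by simp [bregmanDiv_self])

/-- For `ψ` continuously differentiable and strictly convex with coercive Bregman
divergence, and `g` proper, lsc and bounded below, the left Bregman–Moreau envelope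
is nonincreasing in `λ`, bounded above by `g`, and increases to `g(x)` as `λ ↓ 0`. -/
theorem stmt5 {d : ℕ} (ψ : EuclideanSpace ℝ (Fin d) → ℝ)
    (hψ : ContDiff ℝ 1 ψ) (hstrict : StrictConvexOn ℝ Set.univ ψ)
    (hcoer : ∀ x : EuclideanSpace ℝ (Fin d),
      Tendsto (fun y => bregmanDiv ψ y x) (comap (fun y => ‖y‖) atTop) atTop)
    (g : EuclideanSpace ℝ (Fin d) → EReal)
    (hproper : ∃ x, g x ≠ ⊤)
    (hlsc : LowerSemicontinuous g)
    (hbdd : ∃ c : ℝ, ∀ x, (c : EReal) ≤ g x) :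
    ∀ x : EuclideanSpace ℝ (Fin d),
      AntitoneOn (fun lam => leftEnvE ψ g lam x) (Set.Ioi (0 : ℝ)) ∧
      (∀ lam : ℝ, 0 < lam → leftEnvE ψ g lam x ≤ g x) ∧
      Tendsto (fun lam => leftEnvE ψ g lam x) (𝓝[>] (0 : ℝ)) (𝓝 (g x)) := by
  intro x
  have hdiff : Differentiable ℝ ψ := hψ.differentiable one_ne_zero
  have hnonneg := bregmanDiv_nonneg hstrict (hdiff x)
  refine ⟨fun s hs t _ hst => ?_, fun lam _ => leftEnvE_le ψ g lam x, ?_⟩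
  · refine iInf_mono fun y => add_le_add_right (EReal.coe_le_coe_iff.2 ?_) _
    exact mul_le_mul_of_nonneg_right (one_div_le_one_div_of_le hs hst) (hnonneg y)
  refine tendsto_order.2 ⟨fun a ha => ?_, fun b hb =>
    Eventually.of_forall fun lam => (leftEnvE_le ψ g lam x).trans_lt hb⟩
  obtain ⟨r, har, hrg⟩ := EReal.lt_iff_exists_real_btwn.1 ha
  obtain ⟨c, hc⟩ := hbdd
  obtain ⟨ε, hε, hball⟩ := Metric.eventually_nhds_iff.1 (hlsc x r hrg)
  obtain ⟨δ, hδ, hδle⟩ := exists_pos_le_bregmanDiv hdiff hstrict (hcoer x) hε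
  have hlarge : ∀ᶠ lam : ℝ in 𝓝[>] 0, r - c ≤ lam⁻¹ * δ :=
    (tendsto_inv_nhdsGT_zero.atTop_mul_const hδ).eventually_ge_atTop _
  filter_upwards [hlarge, self_mem_nhdsWithin] with lam hlam hpos
  have hinv : (0 : ℝ) ≤ 1 / lam := one_div_nonneg.2 (Set.mem_Ioi.1 hpos).le
  refine har.trans_le (le_iInf fun y => ?_)
  rcases lt_or_ge (dist y x) ε with hy | hy
  · exact (hball hy).le.trans (le_add_of_nonneg_right
      (EReal.coe_nonneg.2 (mul_nonneg hinv (hnonneg y))))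
  · refine le_trans ?_ (add_le_add_left (hc y) _)
    rw [← EReal.coe_add, EReal.coe_le_coe_iff]
    have := mul_le_mul_of_nonneg_left (hδle y hy) hinv
    rw [← one_div] at hlam
    linarith
end
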